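/- arXiv:math/0405592 — 4 statements merged into one kernel-verified Lean document; each statement's English description precedes it below -/
import Mathlib

section
/- ∑_{n=1}^∞ 1/n³ = (5/2) · ∑_{n=1}^∞ (−1)^{n−1} / (C(2n,n) · n³), where C(2n,n) is the central binomial coefficient. -/
/-!
Markov's acceleration of `∑ 1 / (k + a) ^ 3`. The functions `F n x = markovKernel n x` and
`G n x = markovCompanion n x` satisfy `F (n + 1) x - F n x = G n (x + 1) - G n x` and
`F 0 x = 1 / x ^ 3`. Summing over `x = a, a + 1, a + 2, …` telescopes the right-hand side, so
`∑ₖ F n (k + a)` drops by exactly `G n a` when `n` increases by one. Since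
`|x (x + 1) ⋯ (x + n)| ≥ |x| n!`, both `F n` and `G n` decay like `1 / n.centralBinom` up to a
factor `n + 1`. Hence these sums tend to `0` and the initial one, `∑ₖ 1 / (k + a) ^ 3`, equals
`∑ₙ G n a`; at `a = 1` this is Apéry's series.
-/

open Filter Finset Polynomial RCLike
open scoped Nat Topology

theorem tsum_sub_tsum_of_sub_eq_sub_succ {E : Type*} [AddCommGroup E] [TopologicalSpace E]
    [IsTopologicalAddGroup E] [T2Space E] {f f' g : ℕ → E} (hf : Summable f) (hf' : Summable f')
    (hg : Tendsto g atTop (𝓝 0)) (h : ∀ k, f k - f' k = g k - g (k + 1)) :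
    ∑' k, f k - ∑' k, f' k = g 0 := by
  have partial_sums := (hf.hasSum.sub hf'.hasSum).tendsto_sum_nat
  simp only [h, sum_range_sub'] at partial_sums
  exact tendsto_nhds_unique partial_sums (by simpa using hg.const_sub (g 0))

theorem tsum_eq_tsum_of_wz_pair {E : Type*} [NormedAddCommGroup E] [CompleteSpace E]
    {F G : ℕ → ℕ → E} {u v : ℕ → ℝ} (hu : Summable u) (hv : Summable v)
    (hF : ∀ n k, ‖F n k‖ ≤ u n * v k) (hG : ∀ n k, ‖G n k‖ ≤ u n * v k)
    (hFG : ∀ n k, F (n + 1) k - F n k = G n (k + 1) - G n k) :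
    ∑' k, F 0 k = ∑' n, G n 0 := by
  have summable_F (n : ℕ) : Summable (F n) := .of_norm_bounded (hv.mul_left (u n)) (hF n)
  have summable_G : Summable fun n => G n 0 :=
    .of_norm_bounded (hu.mul_right (v 0)) fun n => hG n 0
  have tendsto_G (n : ℕ) : Tendsto (G n) atTop (𝓝 0) :=
    (Summable.of_norm_bounded (hv.mul_left (u n)) (hG n)).tendsto_atTop_zero
  have partial_sums (N : ℕ) : ∑ n ∈ range N, G n 0 = ∑' k, F 0 k - ∑' k, F N k := by
    rw [← sum_range_sub' (fun n => ∑' k, F n k) N]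
    refine sum_congr rfl fun n _ => Eq.symm ?_
    refine tsum_sub_tsum_of_sub_eq_sub_succ (summable_F n) (summable_F (n + 1)) (tendsto_G n) ?_
    exact fun k => by rw [← neg_sub, hFG, neg_sub]
  have tendsto_tsum_F : Tendsto (fun N => ∑' k, F N k) atTop (𝓝 0) := by
    refine squeeze_zero_norm (fun N => tsum_of_norm_bounded (hv.hasSum.mul_left (u N)) (hF N)) ?_
    simpa using hu.tendsto_atTop_zero.mul_const (∑' k, v k)
  have h := summable_G.hasSum.tendsto_sum_nat
  simp only [partial_sums] at h
  exact tendsto_nhds_unique (by simpa using tendsto_tsum_F.const_sub (∑' k, F 0 k)) h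

theorem self_mul_ascPochhammer_eval_add_one {S : Type*} [CommSemiring S] (n : ℕ) (x : S) :
    x * (ascPochhammer S n).eval (x + 1) = (ascPochhammer S n).eval x * (x + n) := by
  rw [← ascPochhammer_succ_eval, ascPochhammer_succ_left]
  simp

section MarkovPair

variable {K : Type*} [Field K]

/-- The hypergeometric factor `(-1)ⁿ n!⁶ / ((2n)! (x (x + 1) ⋯ (x + n))⁴)` shared by both members
of Markov's pair, with `n!² / (2n)!` written as the inverse of a central binomial coefficient. -/
noncomputable def markovWeight (n : ℕ) (x : K) : K :=
  (-1) ^ n * (n ! : K) ^ 4 / (n.centralBinom * (ascPochhammer K (n + 1)).eval x ^ 4)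

/-- The member `F` of Markov's pair `(F, G)`: the terms of the successive transforms of
`∑ₖ 1 / (k + a) ^ 3`, evaluated at `x = k + a`. -/
noncomputable def markovKernel (n : ℕ) (x : K) : K :=
  (x + n / 2) * markovWeight n x

/-- The member `G` of Markov's pair `(F, G)`: the terms of the accelerated series, at `x = a`.
The quadratic factor is Markov's `5 (n + 1)² + 6 (x - 1) (n + 1) + 2 (x - 1)²`. -/
noncomputable def markovCompanion (n : ℕ) (x : K) : K :=
  (2 * x ^ 2 + (6 * n + 2) * x + (5 * n ^ 2 + 4 * n + 1)) / (4 * (2 * n + 1)) * markovWeight n x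

theorem markovKernel_zero (x : K) : markovKernel 0 x = 1 / x ^ 3 := by
  rcases eq_or_ne x 0 with rfl | hx
  · simp [markovKernel]
  · have weight : markovWeight 0 x = 1 / x ^ 4 := by simp [markovWeight]
    rw [markovKernel, weight, Nat.cast_zero]
    field_simp
    ring

theorem markovWeight_add_one (n : ℕ) {x : K} (hx : x ≠ 0) :
    markovWeight n (x + 1) = x ^ 4 / (x + n + 1) ^ 4 * markovWeight n x := by
  have h := self_mul_ascPochhammer_eval_add_one (n + 1) x
  have shift : (ascPochhammer K (n + 1)).eval (x + 1) =
      (ascPochhammer K (n + 1)).eval x * (x + n + 1) / x := by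
    rw [eq_div_iff hx, mul_comm, h]
    push_cast
    ring
  rw [markovWeight, markovWeight, shift]
  field_simp

variable [CharZero K]

theorem cast_centralBinom_succ (n : ℕ) :
    ((n + 1).centralBinom : K) = 2 * (2 * n + 1) * n.centralBinom / (n + 1) := by
  rw [eq_div_iff n.cast_add_one_ne_zero, mul_comm]
  exact_mod_cast n.succ_mul_centralBinom_succ

theorem markovWeight_succ (n : ℕ) (x : K) :
    markovWeight (n + 1) x =
      -((n + 1) ^ 5 / (2 * (2 * n + 1) * (x + n + 1) ^ 4)) * markovWeight n x := by
  rw [markovWeight, markovWeight, cast_centralBinom_succ, ascPochhammer_succ_eval,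
    Nat.factorial_succ]
  push_cast
  field_simp
  ring

theorem markovKernel_succ_sub (n : ℕ) {x : K} (hx : x ≠ 0) (hxn : x + n + 1 ≠ 0) :
    markovKernel (n + 1) x - markovKernel n x =
      markovCompanion n (x + 1) - markovCompanion n x := by
  have : (n : K) * 2 + 1 ≠ 0 := by exact_mod_cast (n * 2).succ_ne_zero
  simp only [markovKernel, markovCompanion, markovWeight_add_one n hx, markovWeight_succ]
  push_cast
  field_simp
  ring

theorem markovCompanion_one (n : ℕ) :
    markovCompanion n (1 : K) =
      5 / 2 * ((-1) ^ n / ((n + 1).centralBinom * ((n : K) + 1) ^ 3)) := by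
  have : (n : K) * 2 + 1 ≠ 0 := by exact_mod_cast (n * 2).succ_ne_zero
  have hfac : (n ! : K) ≠ 0 := by exact_mod_cast n.factorial_ne_zero
  rw [markovCompanion, markovWeight, ascPochhammer_eval_one, cast_centralBinom_succ,
    Nat.factorial_succ]
  push_cast
  field_simp
  ring

end MarkovPair

theorem summable_pow_div_centralBinom (p : ℕ) :
    Summable fun n : ℕ => (n : ℝ) ^ p / n.centralBinom := by
  have geometric : Summable fun n : ℕ => 2 * ((n : ℝ) ^ (p + 1) * (1 / 4) ^ n) :=
    (summable_pow_mul_geometric_of_norm_lt_one (r := (1 / 4 : ℝ)) (p + 1) (by norm_num)).mul_left 2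
  refine (summable_nat_add_iff 1).mp <|
    .of_nonneg_of_le (fun n => by positivity) (fun n => ?_) ((summable_nat_add_iff 1).mpr geometric)
  have hC : (0 : ℝ) < (n + 1).centralBinom := by exact_mod_cast (n + 1).centralBinom_pos
  have four_pow_le : (4 : ℝ) ^ (n + 1) ≤ 2 * (n + 1 : ℕ) * (n + 1).centralBinom := by
    exact_mod_cast Nat.four_pow_le_two_mul_self_mul_centralBinom (n + 1) n.succ_pos
  calc ((n + 1 : ℕ) : ℝ) ^ p / (n + 1).centralBinom
      ≤ ((n + 1 : ℕ) : ℝ) ^ p * (2 * (n + 1 : ℕ) / 4 ^ (n + 1)) := by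
        rw [div_eq_mul_inv]
        gcongr
        rwa [inv_le_comm₀ hC (by positivity), inv_div, div_le_iff₀' (by positivity)]
    _ = 2 * (((n + 1 : ℕ) : ℝ) ^ (p + 1) * (1 / 4) ^ (n + 1)) := by
        rw [one_div_pow]
        ring

section Bounds

variable {𝕜 : Type*} [RCLike 𝕜]

theorem natCast_add_re_le_norm (n : ℕ) (x : 𝕜) : n + re x ≤ ‖(n : 𝕜) + x‖ := by
  simpa using re_le_norm ((n : 𝕜) + x)

theorem norm_mul_factorial_le_norm_ascPochhammer_eval (n : ℕ) {x : 𝕜} (hx : 0 ≤ re x) :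
    ‖x‖ * n ! ≤ ‖(ascPochhammer 𝕜 (n + 1)).eval x‖ := by
  induction n with
  | zero => simp
  | succ n ih =>
    have factor_le : ((n + 1 : ℕ) : ℝ) ≤ ‖x + (n + 1 : ℕ)‖ := by
      rw [add_comm x]
      linarith [natCast_add_re_le_norm (n + 1) x]
    calc ‖x‖ * (n + 1)! = ‖x‖ * n ! * (n + 1 : ℕ) := by
          rw [Nat.factorial_succ]
          push_cast
          ring
      _ ≤ ‖(ascPochhammer 𝕜 (n + 1)).eval x‖ * ‖x + (n + 1 : ℕ)‖ := by gcongr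
      _ = ‖(ascPochhammer 𝕜 (n + 1 + 1)).eval x‖ := by
          rw [ascPochhammer_succ_eval (n + 1) x, norm_mul]

theorem norm_markovWeight_le (n : ℕ) {x : 𝕜} (hx : 0 < re x) :
    ‖markovWeight n x‖ ≤ 1 / (n.centralBinom * ‖x‖ ^ 4) := by
  have hnorm : 0 < ‖x‖ := hx.trans_le (re_le_norm x)
  have hC : (0 : ℝ) < n.centralBinom := by exact_mod_cast n.centralBinom_pos
  have hpoch := norm_mul_factorial_le_norm_ascPochhammer_eval n hx.le
  calc ‖markovWeight n x‖
      = n ! ^ 4 / (n.centralBinom * ‖(ascPochhammer 𝕜 (n + 1)).eval x‖ ^ 4) := by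
        simp [markovWeight]
    _ ≤ n ! ^ 4 / (n.centralBinom * (‖x‖ * n !) ^ 4) := by gcongr
    _ = 1 / (n.centralBinom * ‖x‖ ^ 4) := by field_simp

theorem norm_mul_markovWeight_le (n : ℕ) {x c : 𝕜} (hx : 0 < re x)
    (hc : ‖c‖ ≤ (n + 1) * (‖x‖ + 1) ^ 2) :
    ‖c * markovWeight n x‖ ≤ (n + 1) / n.centralBinom * ((‖x‖ + 1) ^ 2 / ‖x‖ ^ 4) := by
  calc ‖c * markovWeight n x‖
      ≤ (n + 1) * (‖x‖ + 1) ^ 2 * (1 / (n.centralBinom * ‖x‖ ^ 4)) :=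
        norm_mul_le_of_le hc (norm_markovWeight_le n hx)
    _ = (n + 1) / n.centralBinom * ((‖x‖ + 1) ^ 2 / ‖x‖ ^ 4) := by
        rw [mul_one_div, mul_div_mul_comm]

theorem norm_markovKernel_le (n : ℕ) {x : 𝕜} (hx : 0 < re x) :
    ‖markovKernel n x‖ ≤ (n + 1) / n.centralBinom * ((‖x‖ + 1) ^ 2 / ‖x‖ ^ 4) := by
  refine norm_mul_markovWeight_le n hx ?_
  calc ‖x + n / 2‖ ≤ ‖x‖ + n / 2 := (norm_add_le _ _).trans_eq (by simp)
    _ ≤ (n + 1) * (‖x‖ + 1) ^ 2 := by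
        nlinarith [norm_nonneg x, n.cast_nonneg (α := ℝ), sq_nonneg ‖x‖]

theorem norm_markovCompanion_le (n : ℕ) {x : 𝕜} (hx : 0 < re x) :
    ‖markovCompanion n x‖ ≤ (n + 1) / n.centralBinom * ((‖x‖ + 1) ^ 2 / ‖x‖ ^ 4) := by
  refine norm_mul_markovWeight_le n hx ?_
  have norm_numerator_le :
      ‖2 * x ^ 2 + (6 * n + 2) * x + (5 * n ^ 2 + 4 * n + 1)‖ ≤
        2 * ‖x‖ ^ 2 + (6 * n + 2) * ‖x‖ + (5 * n ^ 2 + 4 * n + 1) := by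
    have norm_linear : ‖(6 * n + 2 : 𝕜)‖ = 6 * n + 2 := by
      exact_mod_cast norm_natCast (K := 𝕜) (6 * n + 2)
    have norm_const : ‖(5 * n ^ 2 + 4 * n + 1 : 𝕜)‖ = 5 * n ^ 2 + 4 * n + 1 := by
      exact_mod_cast norm_natCast (K := 𝕜) (5 * n ^ 2 + 4 * n + 1)
    refine norm_add₃_le.trans_eq ?_
    simp only [norm_mul, norm_pow, norm_ofNat, norm_linear, norm_const]
  have norm_denominator : ‖(4 * (2 * n + 1) : 𝕜)‖ = 4 * (2 * n + 1) := by
    exact_mod_cast norm_natCast (K := 𝕜) (4 * (2 * n + 1))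
  rw [norm_div, norm_denominator, div_le_iff₀ (by positivity)]
  calc ‖2 * x ^ 2 + (6 * n + 2) * x + (5 * n ^ 2 + 4 * n + 1)‖
      ≤ 2 * ‖x‖ ^ 2 + (6 * n + 2) * ‖x‖ + (5 * n ^ 2 + 4 * n + 1) := norm_numerator_le
    _ ≤ 2 * ‖x‖ ^ 2 + (6 * n + 2) * ‖x‖ + (5 * n ^ 2 + 4 * n + 1) +
          ((8 * n ^ 2 + 12 * n + 2) * ‖x‖ ^ 2 + (16 * n ^ 2 + 18 * n + 6) * ‖x‖ +
            (3 * n ^ 2 + 8 * n + 3)) := le_add_of_nonneg_right (by positivity)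
    _ = (n + 1) * (‖x‖ + 1) ^ 2 * (4 * (2 * n + 1)) := by ring

theorem summable_one_div_norm_natCast_add_pow {a : 𝕜} (ha : 0 < re a) {p : ℕ} (hp : 1 < p) :
    Summable fun k : ℕ => 1 / ‖(k : 𝕜) + a‖ ^ p := by
  have real_case : Summable fun k : ℕ => 1 / ((k : ℝ) + re a) ^ p := by
    refine ((Real.summable_one_div_nat_add_rpow (re a) p).mpr (by exact_mod_cast hp)).congr
      fun k => ?_
    rw [abs_of_pos (by positivity), Real.rpow_natCast]
  refine .of_nonneg_of_le (fun k => by positivity) (fun k => ?_) real_case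
  gcongr
  exact natCast_add_re_le_norm k a

theorem summable_norm_natCast_add_add_one_sq_div {a : 𝕜} (ha : 0 < re a) :
    Summable fun k : ℕ => (‖(k : 𝕜) + a‖ + 1) ^ 2 / ‖(k : 𝕜) + a‖ ^ 4 := by
  have h {p : ℕ} (hp : 1 < p) := summable_one_div_norm_natCast_add_pow ha hp
  refine (((h (p := 2) (by norm_num)).add ((h (p := 3) (by norm_num)).mul_left 2)).add
    (h (p := 4) (by norm_num))).congr fun k => ?_
  have : 0 < ‖(k : 𝕜) + a‖ := lt_of_lt_of_le (by positivity) (natCast_add_re_le_norm k a)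
  field_simp
  ring

end Bounds

theorem apery_series_zeta_three_general {𝕜 : Type*} [RCLike 𝕜] {a : 𝕜} (ha : 0 < re a) :
    ∑' k : ℕ, 1 / ((k : 𝕜) + a) ^ 3 = ∑' n : ℕ, markovCompanion n a := by
  have re_pos (k : ℕ) : 0 < re ((k : 𝕜) + a) := by
    simpa using add_pos_of_nonneg_of_pos k.cast_nonneg ha
  have ne_zero (k : ℕ) : (k : 𝕜) + a ≠ 0 := fun h => by simpa [h] using re_pos k
  have summable_u : Summable fun n : ℕ => ((n : ℝ) + 1) / n.centralBinom := by
    simpa [add_div] using (summable_pow_div_centralBinom 1).add (summable_pow_div_centralBinom 0)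
  have h := tsum_eq_tsum_of_wz_pair summable_u (summable_norm_natCast_add_add_one_sq_div ha)
    (F := fun n k => markovKernel n ((k : 𝕜) + a))
    (G := fun n k => markovCompanion n ((k : 𝕜) + a))
    (fun n k => norm_markovKernel_le n (re_pos k))
    (fun n k => norm_markovCompanion_le n (re_pos k))
    fun n k => by
      have hkn : (k : 𝕜) + a + n + 1 ≠ 0 := by
        convert ne_zero (k + n + 1) using 1
        push_cast
        ring
      rw [markovKernel_succ_sub n (ne_zero k) hkn, Nat.cast_succ, add_right_comm]
  simpa [markovKernel_zero] using h

theorem apery_series_zeta_three :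
    (∑' n : ℕ, 1 / ((n : ℝ) + 1) ^ 3)
      = (5 / 2) * ∑' n : ℕ, (-1 : ℝ) ^ n /
          ((Nat.choose (2 * (n + 1)) (n + 1) : ℝ) * ((n : ℝ) + 1) ^ 3) := by
  rw [apery_series_zeta_three_general (by simp), ← tsum_mul_left]
  exact tsum_congr markovCompanion_one
end

section
/- ∑_{n=1}^∞ 1/n³ = (1/4) · ∑_{n=1}^∞ (−1)^{n−1} · (56n² − 32n + 5) / ((2n−1)² · n³) · (n!)³ / (3n)!. -/
/-!
Call `F, G` a Wilf–Zeilberger pair if `F (n + 1) k - F n k = G n (k + 1) - G n k`: the discrete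
1-form with horizontal component `G` and vertical component `F` is closed, so its sums along two
lattice paths with the same endpoints agree. For the pair `markovF, markovG` the sum of `G` along
the axis `k = 0` is `2 ζ(3)`. Climbing instead in steps from `(2n, n)` to `(2n + 2, n + 1)` gives
half the Markov–Amdeberhan series, and the vertical segments that join the two paths contribute
`O(1 / N)`.
-/

open Filter Topology Finset
open scoped Nat

section WZPair

variable {A : Type*} [AddCommGroup A] {F G : ℕ → ℕ → A} {p : ℕ → ℕ}

/-- A Wilf–Zeilberger pair. The relation is required only for `k < n`, because the closed forms
below involve `(n - k - 1)!`, where the subtraction is truncated for `n ≤ k`. -/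
def IsWZPair (F G : ℕ → ℕ → A) : Prop :=
  ∀ ⦃n k : ℕ⦄, k < n → F (n + 1) k - F n k = G n (k + 1) - G n k

/-- The sum of the pair `F, G` along the step from `(p n, n)` to `(p (n + 1), n + 1)`, which first
runs horizontally and then rises by one. -/
def staircaseTerm (F G : ℕ → ℕ → A) (p : ℕ → ℕ) (n : ℕ) : A :=
  ∑ m ∈ Ico (p n) (p (n + 1)), G m n + F (p (n + 1)) n

namespace IsWZPair

lemma sum_range_sub_sum_range (h : IsWZPair F G) {N a b : ℕ} (hNa : N ≤ a) (hab : a ≤ b) :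
    ∑ k ∈ range N, F b k - ∑ k ∈ range N, F a k =
      ∑ m ∈ Ico a b, G m N - ∑ m ∈ Ico a b, G m 0 :=
  calc ∑ k ∈ range N, F b k - ∑ k ∈ range N, F a k
      = ∑ k ∈ range N, ∑ m ∈ Ico a b, (F (m + 1) k - F m k) := by
        rw [← sum_sub_distrib]
        exact sum_congr rfl fun k _ => (sum_Ico_sub (F · k) hab).symm
    _ = ∑ m ∈ Ico a b, ∑ k ∈ range N, (G m (k + 1) - G m k) := by
        rw [sum_comm]
        refine sum_congr rfl fun m hm => sum_congr rfl fun k hk => h ?_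
        exact (mem_range.mp hk).trans_le (hNa.trans (mem_Ico.mp hm).1)
    _ = ∑ m ∈ Ico a b, G m N - ∑ m ∈ Ico a b, G m 0 := by
        rw [← sum_sub_distrib]
        exact sum_congr rfl fun m _ => sum_range_sub (G m) N

theorem sum_staircaseTerm (h : IsWZPair F G) (hp : Monotone p) (hp_ge : ∀ n, n ≤ p n) (N : ℕ) :
    ∑ n ∈ range N, staircaseTerm F G p n =
      ∑ m ∈ Ico (p 0) (p N), G m 0 + ∑ k ∈ range N, F (p N) k := by
  induction N with
  | zero => simp
  | succ N ih =>
    have rectangle := h.sum_range_sub_sum_range (hp_ge N) (hp N.le_succ)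
    rw [sum_range_succ, ih, staircaseTerm, sum_range_succ (F (p (N + 1))),
      ← sum_Ico_consecutive _ (hp N.zero_le) (hp N.le_succ), sub_eq_iff_eq_add.mp rectangle]
    abel

theorem tendsto_sum_staircaseTerm [TopologicalSpace A] [ContinuousAdd A] (h : IsWZPair F G)
    (hp : Monotone p) (hp_ge : ∀ n, n ≤ p n) (hp_zero : p 0 = 0) {a b : A}
    (hG : Tendsto (fun N => ∑ m ∈ range N, G m 0) atTop (𝓝 a))
    (hF : Tendsto (fun N => ∑ k ∈ range N, F (p N) k) atTop (𝓝 b)) :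
    Tendsto (fun N => ∑ n ∈ range N, staircaseTerm F G p n) atTop (𝓝 (a + b)) := by
  simp only [h.sum_staircaseTerm hp hp_ge, hp_zero, ← range_eq_Ico]
  exact (hG.comp (tendsto_atTop_mono hp_ge tendsto_id)).add hF

end IsWZPair

end WZPair

/-- The vertical component of the Wilf–Zeilberger pair behind the Markov–Amdeberhan series,
meaningful for `k < n`. -/
noncomputable def markovF (n k : ℕ) : ℝ :=
  (-1) ^ k * k ! ^ 2 * (n - k - 1)! / ((n + k + 1)! * (k + 1))

/-- The horizontal component of the Wilf–Zeilberger pair behind the Markov–Amdeberhan series,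
meaningful for `k ≤ n`. -/
noncomputable def markovG (n k : ℕ) : ℝ :=
  2 * (-1) ^ k * k ! ^ 2 * (n - k)! / ((n + k + 1)! * (n + 1) ^ 2)

lemma markovF_add_add_one (k j : ℕ) :
    markovF (k + j + 1) k = (-1) ^ k * k ! ^ 2 * j ! / ((2 * k + j + 2)! * (k + 1)) := by
  rw [markovF, show k + j + 1 - k - 1 = j by omega,
    show k + j + 1 + k + 1 = 2 * k + j + 2 by ring]

lemma markovG_add (k j : ℕ) :
    markovG (k + j) k =
      2 * (-1) ^ k * k ! ^ 2 * j ! / ((2 * k + j + 1)! * (k + j + 1) ^ 2) := by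
  rw [markovG, Nat.add_sub_cancel_left, show k + j + k + 1 = 2 * k + j + 1 by ring, Nat.cast_add]

theorem isWZPair_markov : IsWZPair markovF markovG := by
  intro n k hkn
  obtain ⟨j, rfl⟩ := Nat.exists_eq_add_of_lt hkn
  have hG : markovG (k + j + 1) (k + 1) = markovG (k + 1 + j) (k + 1) := by
    rw [add_right_comm]
  rw [hG, add_assoc k j 1, markovF_add_add_one, ← add_assoc k j 1, markovF_add_add_one,
    markovG_add, add_assoc k j 1, markovG_add,
    show 2 * k + (j + 1) + 2 = 2 * k + j + 2 + 1 by ring,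
    show 2 * (k + 1) + j + 1 = 2 * k + j + 2 + 1 by ring,
    show 2 * k + (j + 1) + 1 = 2 * k + j + 2 by ring]
  simp only [Nat.factorial_succ (2 * k + j + 2), Nat.factorial_succ j, Nat.factorial_succ k]
  push_cast
  field_simp
  ring

lemma markovG_zero (n : ℕ) : markovG n 0 = 2 * (1 / ((n : ℝ) + 1) ^ 3) := by
  simp only [markovG, Nat.sub_zero, Nat.add_zero, Nat.factorial_succ]
  push_cast
  field_simp
  simp

lemma factorial_sq_mul_factorial_mul_sq_le (k j : ℕ) :
    k ! ^ 2 * j ! * (k + j + 1) ^ 2 ≤ (2 * k + j + 2)! :=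
  have factorial_mul_le (a b : ℕ) : a ! * b ! ≤ (a + b)! :=
    Nat.le_of_dvd (Nat.factorial_pos _) (Nat.factorial_mul_factorial_dvd_factorial_add a b)
  calc k ! ^ 2 * j ! * (k + j + 1) ^ 2
      = k ! * (k ! * j ! * (k + j + 1) ^ 2) := by ring
    _ ≤ k ! * ((k + j)! * (k + j + 1) ^ 2) := by gcongr; exact factorial_mul_le k j
    _ ≤ k ! * (k + j + 2)! := by gcongr; exact Nat.factorial_mul_pow_le_factorial
    _ ≤ (k + (k + j + 2))! := factorial_mul_le _ _
    _ = (2 * k + j + 2)! := by congr 1; ring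

lemma abs_markovF_le {n k : ℕ} (hkn : k < n) : |markovF n k| ≤ 1 / (n : ℝ) ^ 2 := by
  obtain ⟨j, rfl⟩ := Nat.exists_eq_add_of_lt hkn
  have habs : |markovF (k + j + 1) k| = k ! ^ 2 * j ! / ((2 * k + j + 2)! * (k + 1)) := by
    simp only [markovF_add_add_one, abs_div, abs_mul, abs_pow, abs_neg, abs_one, one_pow, one_mul,
      Nat.abs_cast, abs_of_nonneg (show (0 : ℝ) ≤ k + 1 by positivity)]
  rw [habs, div_le_div_iff₀ (by positivity) (by positivity), one_mul]
  calc (k ! ^ 2 * j ! : ℝ) * (k + j + 1 : ℕ) ^ 2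
      ≤ (2 * k + j + 2)! := by exact_mod_cast factorial_sq_mul_factorial_mul_sq_le k j
    _ ≤ (2 * k + j + 2)! * (k + 1) := le_mul_of_one_le_right (by positivity) (by simp)

lemma tendsto_sum_markovF {p : ℕ → ℕ} (hp_ge : ∀ n, n ≤ p n) :
    Tendsto (fun N => ∑ k ∈ range N, markovF (p N) k) atTop (𝓝 0) := by
  refine squeeze_zero_norm (fun N => ?_) tendsto_one_div_atTop_nhds_zero_nat
  calc ‖∑ k ∈ range N, markovF (p N) k‖
      ≤ ∑ k ∈ range N, 1 / (p N : ℝ) ^ 2 :=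
        norm_sum_le_of_le _ fun k hk => abs_markovF_le ((mem_range.mp hk).trans_le (hp_ge N))
    _ = N * (1 / (p N : ℝ) ^ 2) := by simp
    _ ≤ N * (1 / (N : ℝ) ^ 2) := by
        rcases N.eq_zero_or_pos with rfl | hN
        · simp
        · gcongr
          exact hp_ge N
    _ = 1 / (N : ℝ) := by field_simp

/-- The general term of the Markov–Amdeberhan series, indexed from `0`. -/
noncomputable def markovTerm (n : ℕ) : ℝ :=
  (-1 : ℝ) ^ n *
    ((56 * ((n : ℝ) + 1) ^ 2 - 32 * ((n : ℝ) + 1) + 5) /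
      ((2 * ((n : ℝ) + 1) - 1) ^ 2 * ((n : ℝ) + 1) ^ 3)) *
    ((n + 1)! ^ 3 / (3 * (n + 1))!)

lemma staircaseTerm_markov (n : ℕ) :
    staircaseTerm markovF markovG (2 * ·) n = markovTerm n / 2 := by
  have hF : markovF (2 * (n + 1)) n =
      (-1) ^ n * n ! ^ 2 * (n + 1)! / ((3 * n + 3)! * (n + 1)) := by
    rw [show 2 * (n + 1) = n + (n + 1) + 1 by ring, markovF_add_add_one]
    congr 4; ring
  have hG_even : markovG (2 * n) n =
      2 * (-1) ^ n * n ! ^ 2 * n ! / ((3 * n + 1)! * (2 * n + 1) ^ 2) := by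
    rw [two_mul, markovG_add, ← two_mul (n : ℝ), show 2 * n + n + 1 = 3 * n + 1 by ring]
  have hG_odd : markovG (2 * n + 1) n =
      2 * (-1) ^ n * n ! ^ 2 * (n + 1)! / ((3 * n + 2)! * (2 * n + 2) ^ 2) := by
    rw [two_mul, add_assoc, markovG_add, show 2 * n + (n + 1) + 1 = 3 * n + 2 by ring]
    push_cast
    congr 3; ring
  have hterm : markovTerm n = (-1) ^ n *
      ((56 * (n + 1) ^ 2 - 32 * (n + 1) + 5) / ((2 * n + 1) ^ 2 * (n + 1) ^ 3)) *
      ((n + 1)! ^ 3 / (3 * n + 3)!) := by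
    rw [markovTerm, show 2 * ((n : ℝ) + 1) - 1 = 2 * n + 1 by ring, mul_add_one 3 n]
  have hstep : Ico (2 * n) (2 * (n + 1)) = {2 * n, 2 * n + 1} := by
    ext m; simp only [mem_Ico, mem_insert, mem_singleton]; omega
  rw [staircaseTerm, hstep, sum_pair (by omega), hF, hG_even, hG_odd, hterm]
  simp only [Nat.factorial_succ (3 * n + 2), Nat.factorial_succ (3 * n + 1), Nat.factorial_succ n]
  push_cast
  field_simp
  ring

lemma factorial_pow_le_factorial_mul (m n : ℕ) : n ! ^ m ≤ (m * n)! := by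
  simpa using Nat.le_of_dvd (Nat.factorial_pos _)
    (Nat.prod_factorial_dvd_factorial_sum (range m) fun _ => n)

lemma abs_markovTerm_le (n : ℕ) : |markovTerm n| ≤ 56 * (1 / ((n : ℝ) + 1) ^ 3) := by
  have hfactorial : |((n + 1)! ^ 3 / (3 * (n + 1))! : ℝ)| ≤ 1 := by
    rw [abs_of_nonneg (by positivity), div_le_one (by positivity)]
    exact_mod_cast factorial_pow_le_factorial_mul 3 (n + 1)
  have hrational : ∀ x : ℝ, 1 ≤ x →
      |(56 * x ^ 2 - 32 * x + 5) / ((2 * x - 1) ^ 2 * x ^ 3)| ≤ 56 * (1 / x ^ 3) := by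
    intro x hx
    have hnum : 0 ≤ 56 * x ^ 2 - 32 * x + 5 := by nlinarith
    have hden : 0 < 2 * x - 1 := by linarith
    have hratio : 56 * x ^ 2 - 32 * x + 5 ≤ 56 * (2 * x - 1) ^ 2 := by nlinarith
    rw [abs_of_nonneg (by positivity), mul_one_div, div_le_div_iff₀ (by positivity) (by positivity),
      ← mul_assoc]
    gcongr
  rw [markovTerm, abs_mul, abs_mul, abs_neg_one_pow, one_mul]
  exact (mul_le_of_le_one_right (abs_nonneg _) hfactorial).trans (hrational (n + 1) (by simp))

lemma summable_one_div_succ_cube : Summable fun n : ℕ => 1 / ((n : ℝ) + 1) ^ 3 := by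
  simpa using (summable_nat_add_iff 1).mpr
    (Real.summable_one_div_nat_pow.mpr (by norm_num : 1 < 3))

lemma summable_markovTerm : Summable markovTerm :=
  (summable_one_div_succ_cube.mul_left 56).of_norm_bounded abs_markovTerm_le

theorem markov_amdeberhan_zeta_three :
    (∑' n : ℕ, 1 / ((n : ℝ) + 1) ^ 3)
      = (1 / 4) * ∑' n : ℕ,
          (-1 : ℝ) ^ n *
            ((56 * ((n : ℝ) + 1) ^ 2 - 32 * ((n : ℝ) + 1) + 5) /
              ((2 * ((n : ℝ) + 1) - 1) ^ 2 * ((n : ℝ) + 1) ^ 3)) *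
            (((n + 1).factorial : ℝ) ^ 3 / ((3 * (n + 1)).factorial : ℝ)) := by
  change _ = 1 / 4 * ∑' n, markovTerm n
  have hp_ge (n : ℕ) : n ≤ 2 * n := by omega
  have axis_sum : HasSum (markovG · 0) (2 * ∑' n : ℕ, 1 / ((n : ℝ) + 1) ^ 3) := by
    simpa only [markovG_zero] using summable_one_div_succ_cube.hasSum.mul_left 2
  have staircase_sum :
      HasSum (staircaseTerm markovF markovG (2 * ·)) ((∑' n, markovTerm n) / 2) := by
    simpa only [funext staircaseTerm_markov] using summable_markovTerm.hasSum.div_const 2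
  have staircase_tendsto := isWZPair_markov.tendsto_sum_staircaseTerm
    (fun _ _ => Nat.mul_le_mul_left 2) hp_ge rfl axis_sum.tendsto_sum_nat
    (tendsto_sum_markovF hp_ge)
  linarith [tendsto_nhds_unique staircase_sum.tendsto_sum_nat staircase_tendsto]
end

section
/- ∑_{n=1}^∞ 1/n³ = ∑_{n=0}^∞ (−1)^n · (n!)^{10} · (205n² + 250n + 77) / (64 · ((2n+1)!)^5). -/
/-!
A pair `F, G` with `F (n + 1) k - F n k = G n (k + 1) - G n k` is summed in two ways: summing over
`k` telescopes the right-hand side to `-G n 0`, and summing the result over `n` telescopes the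
left-hand side to `-∑ k, F 0 k`, so `∑ n, G n 0 = ∑ k, F 0 k` as soon as `F` is summable over
`ℕ × ℕ` and `G n k → 0` as `k → ∞`. The series for `ζ(3)` comes from a hypergeometric `F` with
`F 0 k = 1 / (k + 1) ^ 3` whose ratio in `n` is small, uniformly in `k`.
-/

namespace AmdeberhanZeilberger

open Filter Topology

lemma hasSum_sub_succ {E : Type*} [AddCommGroup E] [TopologicalSpace E] [IsTopologicalAddGroup E]
    {f : ℕ → E} (hf : Summable f) : HasSum (fun n => f n - f (n + 1)) (f 0) := by
  obtain ⟨s, hs⟩ := hf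
  have hs' : HasSum (fun n => f (n + 1)) (s - f 0) := by
    simpa only [Finset.sum_range_one] using (hasSum_nat_add_iff' 1).2 hs
  simpa only [sub_sub_cancel] using hs.sub hs'

/-- The Wilf–Zeilberger equation `Δₙ F = Δₖ G`, where `F` is the summand and `G` its WZ mate. -/
def IsWZPair {E : Type*} [AddCommGroup E] (F G : ℕ → ℕ → E) : Prop :=
  ∀ n k, F (n + 1) k - F n k = G n (k + 1) - G n k

namespace IsWZPair

lemma mate_zero_eq_tsum_sub_tsum {E : Type*} [AddCommGroup E] [TopologicalSpace E]
    [IsTopologicalAddGroup E] [T2Space E] {F G : ℕ → ℕ → E} (h : IsWZPair F G)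
    (hF : ∀ n, Summable (F n)) (hG : ∀ n, Tendsto (G n) atTop (𝓝 0)) (n : ℕ) :
    G n 0 = ∑' k, F n k - ∑' k, F (n + 1) k := by
  have hpartial (N : ℕ) : ∑ k ∈ Finset.range N, (F n k - F (n + 1) k) = G n 0 - G n N := by
    rw [← Finset.sum_range_sub']
    exact Finset.sum_congr rfl fun k _ => by rw [← neg_sub, h n k, neg_sub]
  have hsum := ((hF n).hasSum.sub (hF (n + 1)).hasSum).tendsto_sum_nat
  have hlim := (hG n).const_sub (G n 0)
  simp only [hpartial] at hsum
  rw [sub_zero] at hlim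
  exact tendsto_nhds_unique hlim hsum

theorem hasSum_mate_zero {E : Type*} [AddCommGroup E] [UniformSpace E] [IsUniformAddGroup E]
    [CompleteSpace E] [T2Space E] {F G : ℕ → ℕ → E} (h : IsWZPair F G)
    (hF : Summable (Function.uncurry F)) (hG : ∀ n, Tendsto (G n) atTop (𝓝 0)) :
    HasSum (fun n => G n 0) (∑' k, F 0 k) := by
  rw [funext (h.mate_zero_eq_tsum_sub_tsum hF.prod_factor hG)]
  exact hasSum_sub_succ hF.prod

end IsWZPair

/-- The hypergeometric term common to the Amdeberhan–Zeilberger summand and its mate, which are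
rational multiples of it up to the sign `(-1) ^ n`. -/
noncomputable def kernel (n k : ℕ) : ℝ :=
  (n.factorial : ℝ) ^ 6 * ((n + k).factorial : ℝ) ^ 4 /
    (((2 * n).factorial : ℝ) * ((2 * n + k + 1).factorial : ℝ) ^ 4)

/-- The summand of the WZ pair, equal to `1 / (k + 1) ^ 3` at `n = 0`. -/
noncomputable def wzSummand (n k : ℕ) : ℝ :=
  (-1) ^ n * (kernel n k * ((3 * n + 2 * k + 2) / 2))

/-- The numerator of the rational function by which `kernel` is multiplied in `wzMate`. Its
coefficients are the solution of the linear system that the WZ equation for `wzSummand` becomes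
after division by `kernel` (Gosper's algorithm in `k`). -/
def mateNumerator (n k : ℝ) : ℝ :=
  (n + 1) ^ 4 * (205 * n ^ 2 + 250 * n + 77)
    + 2 * (n + 1) ^ 3 * (287 * n ^ 2 + 382 * n + 127) * k
    + 8 * (n + 1) ^ 2 * (83 * n ^ 2 + 120 * n + 43) * k ^ 2
    + 8 * (n + 1) * (51 * n ^ 2 + 80 * n + 31) * k ^ 3
    + (141 * n ^ 2 + 240 * n + 101) * k ^ 4
    + 2 * (13 * n + 11) * k ^ 5
    + 2 * k ^ 6

/-- The WZ mate of `wzSummand`; its values at `k = 0` are the terms of the accelerated series. -/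
noncomputable def wzMate (n k : ℕ) : ℝ :=
  (-1) ^ n * (kernel n k * (mateNumerator n k / (4 * (2 * n + 1) * (2 * n + k + 2) ^ 4)))

lemma kernel_pos (n k : ℕ) : 0 < kernel n k := by
  unfold kernel
  positivity

lemma kernel_succ_right (n k : ℕ) :
    kernel n (k + 1) = kernel n k * ((n + k + 1) ^ 4 / (2 * n + k + 2) ^ 4) := by
  have hnum : n + (k + 1) = n + k + 1 := by ring
  have hden : 2 * n + (k + 1) + 1 = 2 * n + k + 1 + 1 := by ring
  rw [kernel, kernel, hnum, hden, Nat.factorial_succ (n + k), Nat.factorial_succ (2 * n + k + 1)]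
  push_cast
  field_simp
  ring

lemma kernel_succ_left (n k : ℕ) :
    kernel (n + 1) k = kernel n k * ((n + 1) ^ 5 * (n + k + 1) ^ 4 /
      (2 * (2 * n + 1) * (2 * n + k + 2) ^ 4 * (2 * n + k + 3) ^ 4)) := by
  have hnum : n + 1 + k = n + k + 1 := by ring
  have hden : 2 * (n + 1) + k + 1 = 2 * n + k + 1 + 1 + 1 := by ring
  have hden' : 2 * (n + 1) = 2 * n + 1 + 1 := by ring
  rw [kernel, kernel, hnum, hden, hden', Nat.factorial_succ n, Nat.factorial_succ (n + k),
    Nat.factorial_succ (2 * n + 1), Nat.factorial_succ (2 * n),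
    Nat.factorial_succ (2 * n + k + 1 + 1), Nat.factorial_succ (2 * n + k + 1)]
  push_cast
  field_simp
  ring

theorem isWZPair_wzSummand_wzMate : IsWZPair wzSummand wzMate := by
  intro n k
  have hshift : (2 * n + (k + 1) + 2 : ℝ) = 2 * n + k + 3 := by ring
  simp only [wzSummand, wzMate, kernel_succ_right, kernel_succ_left, mateNumerator,
    pow_succ (-1 : ℝ) n]
  push_cast
  rw [hshift]
  field_simp
  ring

lemma wzSummand_zero_left (k : ℕ) : wzSummand 0 k = 1 / ((k : ℝ) + 1) ^ 3 := by
  simp only [wzSummand, kernel, Nat.factorial_succ, mul_zero, zero_add, Nat.factorial_zero]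
  push_cast
  field_simp
  ring

lemma wzMate_zero_right (n : ℕ) :
    wzMate n 0 = (-1 : ℝ) ^ n * (n.factorial : ℝ) ^ 10 *
      (205 * (n : ℝ) ^ 2 + 250 * (n : ℝ) + 77) / (64 * ((2 * n + 1).factorial : ℝ) ^ 5) := by
  have hden : (2 * n + 0 + 2 : ℝ) = 2 * (n + 1) := by ring
  simp only [wzMate, kernel, mateNumerator, Nat.factorial_succ, add_zero]
  push_cast
  rw [hden]
  field_simp
  ring

lemma abs_neg_one_pow_mul_of_nonneg {R : Type*} [Ring R] [LinearOrder R] [IsOrderedRing R]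
    (n : ℕ) {x : R} (hx : 0 ≤ x) : |(-1) ^ n * x| = x := by
  rw [abs_mul, abs_neg_one_pow, one_mul, abs_of_nonneg hx]

lemma abs_wzSummand (n k : ℕ) : |wzSummand n k| = kernel n k * ((3 * n + 2 * k + 2) / 2) :=
  abs_neg_one_pow_mul_of_nonneg n (mul_nonneg (kernel_pos n k).le (by positivity))

lemma kernel_succ_left_le (n k : ℕ) : kernel (n + 1) k ≤ 1 / 32 * kernel n k := by
  rw [kernel_succ_left, mul_comm (1 / 32 : ℝ)]
  refine mul_le_mul_of_nonneg_left ?_ (kernel_pos n k).le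
  rw [div_le_iff₀ (by positivity)]
  calc ((n : ℝ) + 1) ^ 5 * (n + k + 1) ^ 4
      = 1 / 32 * (2 * ((n : ℝ) + 1) * (2 * n + 2) ^ 4 * (n + k + 1) ^ 4) := by ring
    _ ≤ 1 / 32 * (2 * (2 * (n : ℝ) + 1) * (2 * n + k + 2) ^ 4 * (2 * n + k + 3) ^ 4) := by
        gcongr 1 / 32 * (2 * ?_ * ?_ ^ 4 * ?_ ^ 4) <;> linarith

lemma abs_wzSummand_succ_le (n k : ℕ) : |wzSummand (n + 1) k| ≤ 1 / 2 * |wzSummand n k| := by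
  have hkernel := kernel_pos n k
  rw [abs_wzSummand, abs_wzSummand]
  calc kernel (n + 1) k * ((3 * (n + 1 : ℕ) + 2 * k + 2) / 2)
      ≤ 1 / 32 * kernel n k * (16 * ((3 * n + 2 * k + 2) / 2)) := by
        gcongr
        · exact kernel_succ_left_le n k
        · push_cast
          linarith [show (0 : ℝ) ≤ n by positivity, show (0 : ℝ) ≤ k by positivity]
    _ = 1 / 2 * (kernel n k * ((3 * n + 2 * k + 2) / 2)) := by ring

lemma abs_wzSummand_le (n k : ℕ) : |wzSummand n k| ≤ (1 / 2) ^ n * (1 / ((k : ℝ) + 1) ^ 3) := by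
  have hzero : |wzSummand 0 k| = 1 / ((k : ℝ) + 1) ^ 3 := by
    rw [wzSummand_zero_left, abs_of_nonneg (by positivity)]
  rw [← hzero]
  exact le_geom (u := fun n => |wzSummand n k|) (by norm_num) n
    fun m _ => abs_wzSummand_succ_le m k

lemma summable_wzSummand : Summable (Function.uncurry wzSummand) := by
  have hcubes : Summable fun k : ℕ => 1 / ((k : ℝ) + 1) ^ 3 := by
    simpa only [Nat.cast_add_one] using
      (summable_nat_add_iff 1).2 (Real.summable_one_div_nat_pow.2 (by norm_num : 1 < 3))
  have hbound := summable_geometric_two.mul_of_nonneg hcubes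
    (fun _ => by positivity) (fun _ => by positivity)
  exact .of_norm_bounded hbound fun p => abs_wzSummand_le p.1 p.2

lemma mateNumerator_nonneg {n k : ℝ} (hn : 0 ≤ n) (hk : 0 ≤ k) : 0 ≤ mateNumerator n k := by
  unfold mateNumerator
  positivity

lemma mateNumerator_le {n k : ℝ} (hn : 0 ≤ n) (hk : 0 ≤ k) :
    mateNumerator n k ≤ 205 * (n + k + 1) ^ 6 := by
  -- Every coefficient of the difference, as a polynomial in `n` and `k`, is nonnegative.
  rw [← sub_nonneg, mateNumerator]
  ring_nf
  positivity

lemma abs_wzMate_le (n k : ℕ) : |wzMate n k| ≤ 205 * (n + k + 1) * |wzSummand n k| := by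
  have hkernel := kernel_pos n k
  have hnum : 0 ≤ mateNumerator n k := mateNumerator_nonneg n.cast_nonneg k.cast_nonneg
  have hratio : mateNumerator n k / (4 * (2 * n + 1) * (2 * n + k + 2) ^ 4)
      ≤ 205 * (n + k + 1) * ((3 * n + 2 * k + 2) / 2) := by
    rw [div_le_iff₀ (by positivity)]
    calc mateNumerator n k ≤ 205 * (n + k + 1) ^ 6 :=
        mateNumerator_le n.cast_nonneg k.cast_nonneg
      _ = 205 * (n + k + 1) * (n + k + 1) * (1 * (n + k + 1) ^ 4) := by ring
      _ ≤ 205 * (n + k + 1) * ((3 * n + 2 * k + 2) / 2)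
          * (4 * (2 * n + 1) * (2 * n + k + 2) ^ 4) := by
        gcongr 205 * (n + k + 1) * ?_ * (?_ * ?_ ^ 4) <;> linarith
  rw [wzMate, abs_neg_one_pow_mul_of_nonneg n (by positivity), abs_wzSummand, mul_left_comm]
  gcongr

lemma tendsto_wzMate (n : ℕ) : Tendsto (wzMate n) atTop (𝓝 0) := by
  have hbound (k : ℕ) : ‖wzMate n k‖ ≤ 205 * (n + 1) * (1 / ((k : ℝ) + 1)) ^ 2 := by
    have hsummand : |wzSummand n k| ≤ 1 / ((k : ℝ) + 1) ^ 3 :=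
      (abs_wzSummand_le n k).trans <| mul_le_of_le_one_left (by positivity) <|
        pow_le_one₀ (by norm_num) (by norm_num)
    calc |wzMate n k| ≤ 205 * (n + k + 1) * |wzSummand n k| := abs_wzMate_le n k
      _ ≤ 205 * ((n + 1) * (k + 1)) * (1 / ((k : ℝ) + 1) ^ 3) := by
        gcongr
        linarith [show (0 : ℝ) ≤ n * k by positivity]
      _ = 205 * (n + 1) * (1 / ((k : ℝ) + 1)) ^ 2 := by field_simp
  refine squeeze_zero_norm hbound ?_
  simpa using ((tendsto_one_div_add_atTop_nhds_zero_nat (𝕜 := ℝ)).pow 2).const_mul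
    (205 * ((n : ℝ) + 1))

end AmdeberhanZeilberger

theorem amdeberhan_zeilberger_zeta_three :
    (∑' n : ℕ, 1 / ((n : ℝ) + 1) ^ 3)
      = ∑' n : ℕ,
          (-1 : ℝ) ^ n * ((n.factorial : ℝ)) ^ 10 *
            (205 * (n : ℝ) ^ 2 + 250 * (n : ℝ) + 77) /
              (64 * ((2 * n + 1).factorial : ℝ) ^ 5) := by
  simp only [← AmdeberhanZeilberger.wzSummand_zero_left, ← AmdeberhanZeilberger.wzMate_zero_right]
  exact (AmdeberhanZeilberger.isWZPair_wzSummand_wzMate.hasSum_mate_zero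
    AmdeberhanZeilberger.summable_wzSummand AmdeberhanZeilberger.tendsto_wzMate).tsum_eq.symm
end

section
/- Let a, b, c, d ∈ ℝ, set t := c + d − a − b − 1, and let x ∈ ℕ satisfy 2x + t ≠ 0 and 2x + t + 1 ≠ 0. Then, as q → 1 with q ∈ (0,1), the quantity (1 − q^{2x+t}(q^a + q^b + q) + q^{3x+t}(q^c + q^d)) / ((1 − q^{2x+t})(1 − q^{2x+t+1})) tends to p(a,b,c,d,x) / ((2x+t)(2x+t+1)), where p(a,b,c,d,x) = (2x+t+a)(2x+t+b) − (x+c−1)(x+d−1). -/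
open Filter Topology

/-!
With `h = log q`, the numerator is an exponential sum `∑ i, w i * exp (α i * h)` whose moments
`∑ w i` and `∑ w i * α i` vanish, the second because `t = c + d - a - b - 1`. It is therefore
`(∑ w i * α i ^ 2) / 2 * h ^ 2 + o(h ^ 2)`, while each factor `1 - q ^ β` of the denominator is
`-β * h + o(h)`. This second-order expansion replaces the two applications of L'Hospital's rule.
-/

lemma tendsto_log_nhdsNE_one : Tendsto Real.log (𝓝[≠] 1) (𝓝[≠] 0) := by
  simpa only [Real.log_one] using
    (Real.hasDerivAt_log one_ne_zero).tendsto_nhdsNE (inv_ne_zero one_ne_zero)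

lemma eventually_pos_nhdsNE_one : ∀ᶠ q : ℝ in 𝓝[≠] 1, 0 < q :=
  eventually_nhdsWithin_of_eventually_nhds (eventually_gt_nhds one_pos)

lemma tendsto_one_sub_rpow_div_log (β : ℝ) :
    Tendsto (fun q : ℝ => (1 - q ^ β) / Real.log q) (𝓝[≠] 1) (𝓝 (-β)) := by
  have hderiv : HasDerivAt (fun h : ℝ => -Real.exp (h * β)) (-β) 0 := by
    simpa using ((hasDerivAt_id (0 : ℝ)).mul_const β).exp.fun_neg
  refine (hderiv.tendsto_slope.comp tendsto_log_nhdsNE_one).congr' ?_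
  filter_upwards [eventually_pos_nhdsNE_one] with q hq
  simp only [Function.comp_apply, slope_def_field, Real.rpow_def_of_pos hq, zero_mul, sub_zero,
    Real.exp_zero]
  ring

lemma isLittleO_rpow_sub_quadratic_log (α : ℝ) :
    (fun q : ℝ => q ^ α - (1 + α * Real.log q + α ^ 2 / 2 * Real.log q ^ 2))
      =o[𝓝 1] fun q => Real.log q ^ 2 := by
  have hlog : Tendsto (fun q => Real.log q * α) (𝓝 1) (𝓝 0) := by
    simpa using (Real.continuousAt_log one_ne_zero).tendsto.mul_const α
  have hscale : (fun q => (Real.log q * α) ^ 2) =O[𝓝 1] fun q => Real.log q ^ 2 := by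
    simpa only [mul_pow, mul_comm] using
      (Asymptotics.isBigO_refl (fun q => Real.log q ^ 2) (𝓝 1)).const_mul_left (α ^ 2)
  refine (((Real.exp_sub_sum_range_succ_isLittleO_pow 2).comp_tendsto hlog).trans_isBigO
    hscale).congr' ?_ .rfl
  filter_upwards [eventually_gt_nhds one_pos] with q hq
  simp only [Function.comp_apply, Real.rpow_def_of_pos hq, Finset.sum_range_succ,
    Finset.sum_range_zero, Nat.factorial]
  push_cast
  ring

section ExponentialSum

variable {ι : Type*} {I : Finset ι} {w α : ι → ℝ}

lemma tendsto_sum_mul_rpow_div_log_sq (hw : ∑ i ∈ I, w i = 0) (hwα : ∑ i ∈ I, w i * α i = 0) :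
    Tendsto (fun q : ℝ => (∑ i ∈ I, w i * q ^ α i) / Real.log q ^ 2) (𝓝[≠] 1)
      (𝓝 ((∑ i ∈ I, w i * α i ^ 2) / 2)) := by
  set m := (∑ i ∈ I, w i * α i ^ 2) / 2 with hm
  have hquad (L : ℝ) : ∑ i ∈ I, w i * (1 + α i * L + α i ^ 2 / 2 * L ^ 2) = m * L ^ 2 := by
    calc ∑ i ∈ I, w i * (1 + α i * L + α i ^ 2 / 2 * L ^ 2)
        = ∑ i ∈ I, w i + (∑ i ∈ I, w i * α i) * L
            + (∑ i ∈ I, w i * α i ^ 2) * (L ^ 2 / 2) := by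
          simp only [Finset.sum_mul, ← Finset.sum_add_distrib]
          exact Finset.sum_congr rfl fun i _ => by ring
      _ = m * L ^ 2 := by rw [hw, hwα, hm]; ring
  have hremainder : (fun q : ℝ => ∑ i ∈ I, w i * q ^ α i - m * Real.log q ^ 2)
      =o[𝓝 1] fun q => Real.log q ^ 2 := by
    simpa only [mul_sub, Finset.sum_sub_distrib, hquad] using
      Asymptotics.IsLittleO.fun_sum fun i (_ : i ∈ I) =>
        (isLittleO_rpow_sub_quadratic_log (α i)).const_mul_left (w i)
  refine tendsto_sub_nhds_zero_iff.1
    ((hremainder.mono nhdsWithin_le_nhds).tendsto_div_nhds_zero.congr' ?_)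
  filter_upwards [tendsto_log_nhdsNE_one self_mem_nhdsWithin] with q hq
  rw [sub_div, mul_div_cancel_right₀ m (pow_ne_zero 2 hq)]

lemma tendsto_sum_mul_rpow_div_one_sub_rpow_mul (hw : ∑ i ∈ I, w i = 0)
    (hwα : ∑ i ∈ I, w i * α i = 0) {β γ : ℝ} (hβ : β ≠ 0) (hγ : γ ≠ 0) :
    Tendsto (fun q : ℝ => (∑ i ∈ I, w i * q ^ α i) / ((1 - q ^ β) * (1 - q ^ γ))) (𝓝[≠] 1)
      (𝓝 ((∑ i ∈ I, w i * α i ^ 2) / 2 / (β * γ))) := by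
  have hlim := (tendsto_sum_mul_rpow_div_log_sq hw hwα).div
    ((tendsto_one_sub_rpow_div_log β).mul (tendsto_one_sub_rpow_div_log γ))
    (mul_ne_zero (neg_ne_zero.2 hβ) (neg_ne_zero.2 hγ))
  rw [neg_mul_neg] at hlim
  refine hlim.congr' ?_
  filter_upwards [tendsto_log_nhdsNE_one self_mem_nhdsWithin] with q hq
  rw [Pi.div_apply, div_mul_div_comm, ← sq, div_div_div_cancel_right₀ (pow_ne_zero 2 hq)]

end ExponentialSum

theorem markov_lhospital_limit_general (a b c d t x : ℝ) (ht_def : t = c + d - a - b - 1)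
    (h1 : 2 * x + t ≠ 0) (h2 : 2 * x + t + 1 ≠ 0) :
    Tendsto
      (fun q : ℝ =>
        (1 - q ^ (2 * x + t) * (q ^ a + q ^ b + q) + q ^ (3 * x + t) * (q ^ c + q ^ d)) /
          ((1 - q ^ (2 * x + t)) * (1 - q ^ (2 * x + t + 1))))
      (𝓝[≠] 1)
      (𝓝 (((2 * x + t + a) * (2 * x + t + b) - (x + c - 1) * (x + d - 1)) /
          ((2 * x + t) * (2 * x + t + 1)))) := by
  let w : Fin 6 → ℝ := ![1, -1, -1, -1, 1, 1]
  let α : Fin 6 → ℝ :=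
    ![0, 2 * x + t + a, 2 * x + t + b, 2 * x + t + 1, 3 * x + t + c, 3 * x + t + d]
  have hmoment₀ : ∑ i, w i = 0 := by
    simp [w, Fin.sum_univ_six]
  have hmoment₁ : ∑ i, w i * α i = 0 := by
    simp only [w, α, Fin.sum_univ_six, Matrix.cons_val, ht_def]
    ring
  have hmoment₂ : (∑ i, w i * α i ^ 2) / 2 =
      (2 * x + t + a) * (2 * x + t + b) - (x + c - 1) * (x + d - 1) := by
    simp only [w, α, Fin.sum_univ_six, Matrix.cons_val, ht_def]
    ring
  rw [← hmoment₂]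
  refine (tendsto_sum_mul_rpow_div_one_sub_rpow_mul hmoment₀ hmoment₁ h1 h2).congr' ?_
  filter_upwards [eventually_pos_nhdsNE_one] with q hq
  congr 1
  simp only [w, α, Fin.sum_univ_six, Matrix.cons_val, Real.rpow_zero, Real.rpow_one,
    Real.rpow_add hq _ a, Real.rpow_add hq _ b, Real.rpow_add hq _ c, Real.rpow_add hq _ d,
    Real.rpow_add hq _ 1]
  ring

theorem markov_lhospital_limit (a b c d : ℝ) (t : ℝ)
    (ht_def : t = c + d - a - b - 1) (x : ℕ)
    (h1 : 2 * (x : ℝ) + t ≠ 0) (h2 : 2 * (x : ℝ) + t + 1 ≠ 0) :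
    Tendsto
      (fun q : ℝ =>
        (1 - q ^ (2 * (x : ℝ) + t) * (q ^ a + q ^ b + q) +
            q ^ (3 * (x : ℝ) + t) * (q ^ c + q ^ d)) /
          ((1 - q ^ (2 * (x : ℝ) + t)) * (1 - q ^ (2 * (x : ℝ) + t + 1))))
      (𝓝[Set.Ioo (0 : ℝ) 1] 1)
      (𝓝 (((2 * (x : ℝ) + t + a) * (2 * (x : ℝ) + t + b) -
            ((x : ℝ) + c - 1) * ((x : ℝ) + d - 1)) /
          ((2 * (x : ℝ) + t) * (2 * (x : ℝ) + t + 1)))) := by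
  exact (markov_lhospital_limit_general a b c d t x ht_def h1 h2).mono_left
    (nhdsWithin_mono 1 fun _ hq => hq.2.ne)
end
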